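/- arXiv:1103.5517 — 3 statements merged into one kernel-verified Lean document; each statement's English description precedes it below -/
import Mathlib

section
/- Let G and H be nonempty finite simple graphs with maximal degree at most M, each of whose connected components are pairwise nonisomorphic. If Ψ(G) = Ψ(H), then G and H are isomorphic graphs. (Thus the restriction of the law map Ψ to graphs with pairwise nonisomorphic connected components is injective.) -/
/-!
The law of a finite graph has as its atoms exactly the classes of its rooted components, so equality
of laws means that every rooted component of either graph is isomorphic to a rooted component of the
other. For each component of `G`, choose a representative `v` and a root-preserving isomorphism onto
some component of `H`; these glue to a map `f : V → W`. An isomorphism of components remains a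
rooted isomorphism when the root `v` is moved to any `x` and `w` to the image of `x`
(`LocalIso.reroot`). Hence, as the components of `G` are pairwise nonisomorphic, different
components of `G` are sent to different components of `H`, so `f` is injective and reflects
adjacency; as the components of `H` are pairwise nonisomorphic, every component of `H` is hit, so
`f` is surjective.
-/

open MeasureTheory Filter Topology ENNReal
open scoped Classical

/-- A rooted graph: a simple graph together with a distinguished root vertex. -/
structure RootedGraph : Type 1 where
  V : Type
  G : SimpleGraph V
  root : V

namespace RootedGraph

/-- Isomorphism of rooted graphs: a graph isomorphism carrying root to root. -/
def Iso (A B : RootedGraph) : Prop :=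
  ∃ φ : A.G ≃g B.G, φ A.root = B.root

/-- The rooted ball of radius `r` around the root: the subgraph induced by the
vertices at shortest-path distance at most `r` from the root. -/
def ball (A : RootedGraph) (r : ℕ) : RootedGraph where
  V := {v : A.V // A.G.dist A.root v ≤ r}
  G := SimpleGraph.induce {v : A.V | A.G.dist A.root v ≤ r} A.G
  root := ⟨A.root, by change A.G.dist A.root A.root ≤ r; simp [SimpleGraph.dist_self]⟩

/-- The metric ρ on (isomorphism classes of) rooted graphs. -/
noncomputable def rho (A B : RootedGraph) : ℝ :=
  if A.Iso B then 0
  else 1 / (1 + ((sSup {s : ℕ | (A.ball s).Iso (B.ball s)} : ℕ) : ℝ))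

/-- Membership in Ĝ: connected and locally finite. -/
def InG (A : RootedGraph) : Prop :=
  A.G.Connected ∧ ∀ v : A.V, (A.G.neighborSet v).Finite

/-- Membership in Ĝ_M: connected, locally finite, and all degrees at most `M`. -/
def InGM (M : ℕ) (A : RootedGraph) : Prop :=
  A.InG ∧ ∀ v : A.V, (A.G.neighborSet v).ncard ≤ M

end RootedGraph

/-- The space of isomorphism classes of rooted graphs. -/
def RG := Quot RootedGraph.Iso

noncomputable instance : MeasurableSpace RG := ⊤

/-- The isomorphism class of a rooted graph. -/
def cls (A : RootedGraph) : RG := Quot.mk _ A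

/-- The connected component of `x` in `G`, rooted at `x`. -/
def comp {V : Type} (G : SimpleGraph V) (x : V) : RootedGraph :=
  ⟨{v : V // G.Reachable x v}, SimpleGraph.induce {v : V | G.Reachable x v} G,
    ⟨x, SimpleGraph.Reachable.refl x⟩⟩

/-- The orbit of a vertex under the automorphism group of the graph. -/
def orbit {V : Type} (G : SimpleGraph V) (o : V) : Set V :=
  {v : V | ∃ σ : G ≃g G, σ v = o}

/-- The law of a finite graph: the image of the uniform measure on the vertex set
under the map sending a vertex to its rooted connected component. -/
noncomputable def law {V : Type} (G : SimpleGraph V) : Measure RG :=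
  (Nat.card V : ℝ≥0∞)⁻¹ • Measure.sum (fun x : V => Measure.dirac (cls (comp G x)))

/-- Bounded continuous real-valued functions on (Ĝ_M, ρ), described on representatives. -/
def BddContOn (M : ℕ) (f : RG → ℝ) : Prop :=
  (∃ C : ℝ, ∀ c : RG, |f c| ≤ C) ∧
  ∀ A : RootedGraph, A.InGM M → ∀ ε : ℝ, 0 < ε → ∃ δ : ℝ, 0 < δ ∧
    ∀ B : RootedGraph, B.InGM M → RootedGraph.rho A B < δ → |f (cls A) - f (cls B)| < ε

/-- Weak convergence of a sequence of measures on Ĝ_M. -/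
def WeakLimTo (M : ℕ) (μs : ℕ → Measure RG) (μ : Measure RG) : Prop :=
  ∀ f : RG → ℝ, BddContOn M f →
    Filter.Tendsto (fun n => ∫ c, f c ∂(μs n)) Filter.atTop (nhds (∫ c, f c ∂μ))

/-- The map `f` restricts to a graph isomorphism from the component of `v` onto the component of
`w` that sends `v` to `w`. The values of `f` off the component of `v` are unconstrained, which
avoids working with subtypes when the root changes. -/
structure LocalIso {V W : Type} (G : SimpleGraph V) (H : SimpleGraph W) (v : V) (w : W)
    (f : V → W) : Prop where
  map_root : f v = w
  bijOn : Set.BijOn f {x | G.Reachable v x} {y | H.Reachable w y}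
  adj_iff : ∀ x y, G.Reachable v x → G.Reachable v y → (H.Adj (f x) (f y) ↔ G.Adj x y)

theorem rootedIso_equivalence : Equivalence RootedGraph.Iso where
  refl _ := ⟨SimpleGraph.Iso.refl, rfl⟩
  symm := by
    rintro A B ⟨φ, h⟩
    exact ⟨φ.symm, by rw [← h]; exact φ.symm_apply_apply _⟩
  trans := by
    rintro A B C ⟨φ, h⟩ ⟨ψ, k⟩
    exact ⟨ψ.comp φ, by rw [← k, ← h]; rfl⟩

theorem cls_eq_iff (A B : RootedGraph) : cls A = cls B ↔ A.Iso B :=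
  rootedIso_equivalence.quot_mk_eq_iff A B

theorem exists_localIso {V W : Type} {G : SimpleGraph V} {H : SimpleGraph W} {v : V} {w : W}
    (h : (comp G v).Iso (comp H w)) : ∃ f, LocalIso G H v w f := by
  obtain ⟨φ, hφ⟩ := h
  let e : {x // G.Reachable v x} ≃ {y // H.Reachable w y} := φ.toEquiv
  have he : e ⟨v, SimpleGraph.Reachable.refl v⟩ = ⟨w, SimpleGraph.Reachable.refl w⟩ := hφ
  have ha : ∀ a b, H.Adj (e a).1 (e b).1 ↔ G.Adj a.1 b.1 := fun a b =>
    φ.map_rel_iff (a := a) (b := b)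
  let f : V → W := fun x => if hx : G.Reachable v x then (e ⟨x, hx⟩).1 else w
  have hf : ∀ x (hx : G.Reachable v x), f x = (e ⟨x, hx⟩).1 := fun x hx => dif_pos hx
  refine ⟨f, ?_, ⟨?_, ?_, ?_⟩, ?_⟩
  · rw [hf v (SimpleGraph.Reachable.refl v), he]
  · intro x hx
    rw [hf x hx]
    exact (e ⟨x, hx⟩).2
  · intro x hx y hy hxy
    rw [hf x hx, hf y hy] at hxy
    exact congrArg Subtype.val (e.injective (Subtype.ext hxy))
  · intro y hy
    refine ⟨(e.symm ⟨y, hy⟩).1, (e.symm ⟨y, hy⟩).2, ?_⟩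
    rw [hf _ (e.symm ⟨y, hy⟩).2]
    simp
  · intro x y hx hy
    rw [hf x hx, hf y hy]
    exact ha _ _

theorem LocalIso.iso {V W : Type} {G : SimpleGraph V} {H : SimpleGraph W} {v : V} {w : W}
    {f : V → W} (h : LocalIso G H v w f) : (comp G v).Iso (comp H w) :=
  ⟨⟨h.bijOn.equiv f, fun {a b} => h.adj_iff a.1 b.1 a.2 b.2⟩, Subtype.ext h.map_root⟩

theorem setOf_reachable_eq {V : Type} {G : SimpleGraph V} {v x : V} (h : G.Reachable v x) :
    {y | G.Reachable x y} = {y | G.Reachable v y} :=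
  Set.ext fun _ => ⟨h.trans, h.symm.trans⟩

/-- The root of a local isomorphism can be moved to any vertex of its component. -/
theorem LocalIso.reroot {V W : Type} {G : SimpleGraph V} {H : SimpleGraph W} {v : V} {w : W}
    {f : V → W} (h : LocalIso G H v w f) {x : V} (hx : G.Reachable v x) :
    LocalIso G H x (f x) f where
  map_root := rfl
  bijOn := by
    rw [setOf_reachable_eq hx, setOf_reachable_eq (h.bijOn.mapsTo hx)]
    exact h.bijOn
  adj_iff a b ha hb := h.adj_iff a b (hx.trans ha) (hx.trans hb)

/-- The atoms of the law are the classes of the rooted components. -/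
theorem law_singleton_ne_zero_iff {V : Type} [Fintype V] (G : SimpleGraph V) (c : RG) :
    law G {c} ≠ 0 ↔ ∃ x, cls (comp G x) = c := by
  have hc : MeasurableSet ({c} : Set RG) := trivial
  simp [law, Measure.dirac_apply' _ hc, Pi.single_apply]

theorem exists_iso_of_law_eq {V W : Type} [Fintype V] [Fintype W] {G : SimpleGraph V}
    {H : SimpleGraph W} (h : law G = law H) (v : V) : ∃ w, (comp G v).Iso (comp H w) := by
  obtain ⟨w, hw⟩ := (law_singleton_ne_zero_iff H (cls (comp G v))).1
    (h ▸ (law_singleton_ne_zero_iff G _).2 ⟨v, rfl⟩)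
  exact ⟨w, (cls_eq_iff _ _).1 hw.symm⟩

/-- The law map Ψ is injective on finite graphs whose connected components are pairwise
nonisomorphic. -/
theorem law_injective_on_distinct_components (M : ℕ) {V W : Type}
    [Fintype V] [Nonempty V] [Fintype W] [Nonempty W]
    (G : SimpleGraph V) (H : SimpleGraph W)
    (hGdeg : ∀ v : V, (G.neighborSet v).ncard ≤ M)
    (hHdeg : ∀ w : W, (H.neighborSet w).ncard ≤ M)
    (hGcomp : ∀ x y : V, (comp G x).Iso (comp G y) → G.Reachable x y)
    (hHcomp : ∀ x y : W, (comp H x).Iso (comp H y) → H.Reachable x y)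
    (h : law G = law H) : Nonempty (G ≃g H) := by
  choose t ht using exists_iso_of_law_eq h
  choose g hg using fun v => exists_localIso (ht v)
  let r : V → V := fun x => (G.connectedComponentMk x).out
  have hr : ∀ x, G.Reachable (r x) x := fun x =>
    SimpleGraph.ConnectedComponent.exact (Quot.out_eq (G.connectedComponentMk x))
  have hr_eq : ∀ {x y}, G.Reachable x y → r x = r y := fun {x y} hxy =>
    congrArg Quot.out (SimpleGraph.ConnectedComponent.sound hxy)
  let f : V → W := fun x => g (r x) x
  have hf : ∀ x, LocalIso G H x (f x) (g (r x)) := fun x => (hg (r x)).reroot (hr x)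
  have hf_reach : ∀ {x y}, H.Reachable (f x) (f y) → G.Reachable x y := by
    intro x y hxy
    -- `f y` is also the image of some `u` in the component of `x`.
    obtain ⟨u, hu, huy⟩ := (hf x).bijOn.surjOn hxy
    have hxu : (comp G u).Iso (comp H (f y)) := huy ▸ ((hf x).reroot hu).iso
    exact hu.trans (hGcomp u y
      (rootedIso_equivalence.trans hxu (rootedIso_equivalence.symm (hf y).iso)))
  have hf_eq : ∀ {x y}, G.Reachable x y → f y = g (r x) y := fun {x y} hxy => by
    change g (r y) y = _
    rw [hr_eq hxy]
  have hinj : Function.Injective f := by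
    intro x y hxy
    have hreach : G.Reachable x y := hf_reach (hxy ▸ SimpleGraph.Reachable.refl _)
    exact (hf x).bijOn.injOn (SimpleGraph.Reachable.refl x) hreach (hxy.trans (hf_eq hreach))
  have hsurj : Function.Surjective f := by
    intro w
    obtain ⟨x, hx⟩ := exists_iso_of_law_eq h.symm w
    have hw : H.Reachable (f x) w :=
      (hHcomp w (f x) (rootedIso_equivalence.trans hx (hf x).iso)).symm
    obtain ⟨y, hy, hyw⟩ := (hf x).bijOn.surjOn hw
    exact ⟨y, (hf_eq hy).trans hyw⟩
  have hadj : ∀ {x y}, G.Reachable x y → (H.Adj (f x) (f y) ↔ G.Adj x y) := by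
    intro x y hxy
    rw [hf_eq hxy]
    exact (hf x).adj_iff x y (SimpleGraph.Reachable.refl x) hxy
  exact ⟨⟨Equiv.ofBijective f ⟨hinj, hsurj⟩, fun {x y} =>
    ⟨fun hxy => (hadj (hf_reach (SimpleGraph.Adj.reachable hxy))).1 hxy,
      fun hxy => (hadj hxy.reachable).2 hxy⟩⟩⟩
end

section
/- Let (G_n) be a sequence of nonempty finite simple graphs with maximal degree at most M and let [G,o] ∈ Ĝ_M. If the sequence of laws (Ψ(G_n)) converges weakly to the Dirac measure δ_{[G,o]}, then there exists a sequence of vertices o_n ∈ V(G_n) such that the rooted connected components [(G_n)_{o_n}, o_n] converge to [G,o] in the metric ρ. -/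
/-!
For a fixed radius `r`, the function sending `[B, o']` to `1` if the `r`-balls of `B` and `A` are
isomorphic and to `0` otherwise is bounded and locally constant for `ρ` (`bddContOn_ballTest`):
isomorphic `s`-balls have isomorphic `r`-balls for `r ≤ s`. Testing weak convergence against it
shows that its integral against `Ψ(G_n)` tends to `1`, so for all large `n` it does not vanish at
every vertex; hence some vertex `x` of `G_n` has an `r`-ball isomorphic to that of `A`
(`exists_ball_iso_of_integral_ne_zero`). A diagonal choice (the largest `r ≤ n` that is realised
in `G_n`) gives vertices `o_n` whose balls agree with those of `A` up to radii tending to infinity.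

It remains to bound `ρ` by `1 / (1 + r)` when the `r`-balls agree. Since `sSup` of an unbounded set
of naturals is `0`, this needs the fact that a finite connected graph whose balls agree with those
of a connected graph for arbitrarily large radii is isomorphic to it (`iso_of_not_bddAbove`), which
holds by counting vertices.
-/

open MeasureTheory Filter Topology ENNReal
open scoped Classical

/-! ### Balls and isomorphisms of rooted graphs -/

namespace RootedGraph

theorem Iso.symm' {A B : RootedGraph} (h : A.Iso B) : B.Iso A := by
  obtain ⟨φ, hφ⟩ := h
  exact ⟨φ.symm, by rw [← hφ]; exact φ.symm_apply_apply _⟩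

theorem Iso.trans' {A B C : RootedGraph} (h : A.Iso B) (h' : B.Iso C) : A.Iso C := by
  obtain ⟨φ, hφ⟩ := h
  obtain ⟨ψ, hψ⟩ := h'
  exact ⟨φ.trans ψ, by rw [← hψ, ← hφ]; rfl⟩

theorem dist_hom_le {V W : Type} {G : SimpleGraph V} {H : SimpleGraph W} (φ : G →g H) {u v : V}
    (h : G.Reachable u v) : H.dist (φ u) (φ v) ≤ G.dist u v := by
  obtain ⟨p, hp⟩ := h.exists_walk_length_eq_dist
  rw [← hp, ← SimpleGraph.Walk.length_map φ p]
  exact SimpleGraph.dist_le _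

theorem dist_iso {V W : Type} {G : SimpleGraph V} {H : SimpleGraph W} (φ : G ≃g H) (u v : V) :
    H.dist (φ u) (φ v) = G.dist u v := by
  by_cases h : G.Reachable u v
  · refine le_antisymm (dist_hom_le φ.toHom h) ?_
    have := dist_hom_le φ.symm.toHom (h.map φ.toHom)
    simpa using this
  · rw [SimpleGraph.dist_eq_zero_of_not_reachable h, SimpleGraph.dist_eq_zero_of_not_reachable]
    exact fun h' => h (φ.reachable_iff.1 h')

theorem Iso.ball {A B : RootedGraph} (h : A.Iso B) (r : ℕ) : (A.ball r).Iso (B.ball r) := by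
  obtain ⟨φ, hφ⟩ := h
  have hd : ∀ v, B.G.dist B.root (φ v) = A.G.dist A.root v := fun v => by
    rw [← hφ, dist_iso]
  refine ⟨⟨φ.toEquiv.subtypeEquiv fun v => ?_, ?_⟩, Subtype.ext hφ⟩
  · change _ ↔ B.G.dist B.root (φ v) ≤ r
    rw [hd]
  · intro a b
    exact φ.map_adj_iff

/-- Geodesics from the root stay inside the ball, so that passing to a ball does not change
distances to the root. -/
theorem dist_ball {A : RootedGraph} (hA : A.G.Connected) (s : ℕ) (v : (A.ball s).V) :
    (A.ball s).G.dist (A.ball s).root v = A.G.dist A.root v.1 := by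
  obtain ⟨p, hp⟩ := hA.exists_walk_length_eq_dist A.root v.1
  have hsup : ∀ x ∈ p.support, x ∈ {v : A.V | A.G.dist A.root v ≤ s} := by
    intro x hx
    have h1 := SimpleGraph.dist_le (p.takeUntil x hx)
    have h2 := p.length_takeUntil_le_length hx
    have h3 : A.G.dist A.root v.1 ≤ s := v.2
    change A.G.dist A.root x ≤ s
    omega
  let q : (A.ball s).G.Walk (A.ball s).root v := p.induce _ hsup
  have hq : q.length = p.length := by
    have h := congrArg SimpleGraph.Walk.length (SimpleGraph.Walk.map_induce p hsup)
    rw [SimpleGraph.Walk.length_map] at h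
    exact h
  refine le_antisymm ?_ ?_
  · rw [← hp, ← hq]
    exact SimpleGraph.dist_le q
  · exact dist_hom_le (SimpleGraph.Embedding.induce _).toHom q.reachable

/-- Ball of a ball; connectedness matters because `dist` is `0` between unreachable vertices. -/
theorem ball_ball {A : RootedGraph} (hA : A.G.Connected) {r s : ℕ} (hrs : r ≤ s) :
    ((A.ball s).ball r).Iso (A.ball r) := by
  refine ⟨⟨⟨fun v => ⟨v.1.1, ?_⟩, fun v => ⟨⟨v.1, ?_⟩, ?_⟩, ?_, ?_⟩, ?_⟩, ?_⟩
  · rw [← dist_ball hA s v.1]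
    exact v.2
  · exact le_trans v.2 hrs
  · exact (dist_ball hA s ⟨v.1, le_trans v.2 hrs⟩).trans_le v.2
  · intro v; rfl
  · intro v; rfl
  · intro a b; exact Iff.rfl
  · rfl

theorem ball_iso_mono {A B : RootedGraph} (hA : A.G.Connected) (hB : B.G.Connected) {r s : ℕ}
    (hrs : r ≤ s) (h : (A.ball s).Iso (B.ball s)) : (A.ball r).Iso (B.ball r) :=
  ((ball_ball hA hrs).symm'.trans' (h.ball r)).trans' (ball_ball hB hrs)

theorem ball_iso_self {A : RootedGraph} {s : ℕ} (h : ∀ v, A.G.dist A.root v ≤ s) :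
    (A.ball s).Iso A :=
  ⟨⟨Equiv.subtypeUnivEquiv h, Iff.rfl⟩, rfl⟩

/-! ### Agreement of balls and the metric -/

/-- Counting vertices in large balls shows that `B` is finite as well, and then a single ball of
large radius is the whole graph on both sides. -/
theorem iso_of_not_bddAbove {A B : RootedGraph} [Finite A.V]
    (h : ¬ BddAbove {s : ℕ | (A.ball s).Iso (B.ball s)}) : A.Iso B := by
  have hlarge : ∀ N : ℕ, ∃ s, N ≤ s ∧ (A.ball s).Iso (B.ball s) := by
    intro N
    obtain ⟨s, hs, hNs⟩ := not_bddAbove_iff.1 h N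
    exact ⟨s, hNs.le, hs⟩
  have hBfin : Finite B.V := by
    by_contra hinf
    have : Infinite B.V := not_finite_iff_infinite.1 hinf
    obtain ⟨t, ht⟩ := Infinite.exists_subset_card_eq B.V (Nat.card A.V + 1)
    obtain ⟨s, hs, φ, -⟩ := hlarge (t.sup fun v => B.G.dist B.root v)
    let g : t → A.V := fun v =>
      (φ.symm ⟨v.1, (Finset.le_sup (f := fun v => B.G.dist B.root v) v.2).trans hs⟩).1
    have hg : Function.Injective g := by
      intro v w hvw
      have := φ.symm.injective (Subtype.ext hvw)
      exact Subtype.ext (congrArg (fun x : (B.ball s).V => x.1) this)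
    have := Nat.card_le_card_of_injective g hg
    simp [ht] at this
  obtain ⟨a, ha⟩ := (Set.finite_range fun v => A.G.dist A.root v).bddAbove
  obtain ⟨b, hb⟩ := (Set.finite_range fun v => B.G.dist B.root v).bddAbove
  obtain ⟨s, hs, hi⟩ := hlarge (max a b)
  have hAs : (A.ball s).Iso A := ball_iso_self fun v =>
    (ha ⟨v, rfl⟩).trans ((le_max_left a b).trans hs)
  have hBs : (B.ball s).Iso B := ball_iso_self fun v =>
    (hb ⟨v, rfl⟩).trans ((le_max_right a b).trans hs)
  exact (hAs.symm'.trans' hi).trans' hBs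

theorem rho_nonneg (A B : RootedGraph) : 0 ≤ rho A B := by
  unfold rho
  split_ifs
  · exact le_rfl
  · positivity

theorem rho_le_of_ball_iso {A B : RootedGraph} [Finite A.V] {r : ℕ}
    (h : (A.ball r).Iso (B.ball r)) : rho A B ≤ 1 / (1 + (r : ℝ)) := by
  unfold rho
  split_ifs with hi
  · positivity
  · have hb : BddAbove {s : ℕ | (A.ball s).Iso (B.ball s)} := by
      by_contra hb
      exact hi (iso_of_not_bddAbove hb)
    have : (r : ℝ) ≤ (sSup {s : ℕ | (A.ball s).Iso (B.ball s)} : ℕ) := by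
      exact_mod_cast le_csSup hb h
    gcongr

theorem ball_iso_of_rho_lt {A B : RootedGraph} (hA : A.G.Connected) (hB : B.G.Connected) {r : ℕ}
    (h : rho A B < 1 / (1 + (r : ℝ))) : (A.ball r).Iso (B.ball r) := by
  unfold rho at h
  split_ifs at h with hi
  · exact hi.ball r
  · set S := {s : ℕ | (A.ball s).Iso (B.ball s)} with hS
    have hlt : r < sSup S := by
      have := lt_of_one_div_lt_one_div (by positivity) h
      have : (r : ℝ) < (sSup S : ℕ) := by linarith
      exact_mod_cast this
    -- the junk values of `sSup` are `0`, hence excluded by `r < sSup S`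
    have hne : S.Nonempty := by
      by_contra hne
      rw [Set.not_nonempty_iff_eq_empty.1 hne] at hlt
      simp at hlt
    have hb : BddAbove S := by
      by_contra hb
      rw [Nat.sSup_of_not_bddAbove hb] at hlt
      exact absurd hlt (Nat.not_lt_zero _)
    exact ball_iso_mono hA hB hlt.le (Nat.sSup_mem hne hb)

end RootedGraph

/-! ### The test functions -/

/-- The proposition, on isomorphism classes, that the `r`-ball is isomorphic to that of `A`. -/
def BallAgrees (A : RootedGraph) (r : ℕ) : RG → Prop :=
  Quot.lift (fun B => (B.ball r).Iso (A.ball r)) fun _ _ h =>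
    propext ⟨fun h' => (h.ball r).symm'.trans' h', fun h' => (h.ball r).trans' h'⟩

/-- The indicator function of the classes whose `r`-ball is isomorphic to that of `A`. -/
noncomputable def ballTest (A : RootedGraph) (r : ℕ) (c : RG) : ℝ :=
  if BallAgrees A r c then 1 else 0

/-- Continuity holds because the test function is constant on `ρ`-balls of radius `1 / (1 + r)`. -/
theorem bddContOn_ballTest (M : ℕ) (A : RootedGraph) (r : ℕ) : BddContOn M (ballTest A r) := by
  refine ⟨⟨1, fun c => ?_⟩, fun B hB ε hε => ⟨1 / (1 + (r : ℝ)), by positivity, ?_⟩⟩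
  · unfold ballTest
    split_ifs <;> simp
  · intro C hC hBC
    have hi := RootedGraph.ball_iso_of_rho_lt hB.1.1 hC.1.1 hBC
    have heq : BallAgrees A r (cls B) ↔ BallAgrees A r (cls C) :=
      ⟨fun h' => hi.symm'.trans' h', fun h' => hi.trans' h'⟩
    simpa [ballTest, heq] using hε

instance : DiscreteMeasurableSpace RG := ⟨fun _ => trivial⟩

/-- If no `r`-ball of `G` were isomorphic to that of `A`, the test function would vanish at every
atom of the law. -/
theorem exists_ball_iso_of_integral_ne_zero {V : Type} [Finite V] (G : SimpleGraph V)
    (A : RootedGraph) (r : ℕ) (h : ∫ c, ballTest A r c ∂(law G) ≠ 0) :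
    ∃ x : V, ((comp G x).ball r).Iso (A.ball r) := by
  by_contra! hno
  refine h (integral_eq_zero_of_ae ?_)
  refine Measure.ae_smul_measure ?_ _
  refine Measure.ae_sum_iff.2 fun x => (ae_dirac_iff (MeasurableSet.of_discrete)).2 ?_
  exact if_neg (hno x)

/-- If the laws Ψ(G_n) converge weakly to a Dirac measure δ_{[G,o]}, then there are vertices
`o_n ∈ V(G_n)` with `[(G_n)_{o_n}, o_n] → [G,o]` in the metric ρ. -/
theorem weak_conv_to_dirac_implies_graph_conv (M : ℕ)
    (V : ℕ → Type) (hfin : ∀ n, Finite (V n)) (hne : ∀ n, Nonempty (V n))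
    (Gs : (n : ℕ) → SimpleGraph (V n))
    (hdeg : ∀ n, ∀ v : V n, ((Gs n).neighborSet v).ncard ≤ M)
    (A : RootedGraph) (hA : A.InGM M)
    (h : WeakLimTo M (fun n => law (Gs n)) (MeasureTheory.Measure.dirac (cls A))) :
    ∃ o : (n : ℕ) → V n,
      Filter.Tendsto (fun n => RootedGraph.rho (comp (Gs n) (o n)) A)
        Filter.atTop (nhds 0) := by
  have hev : ∀ r : ℕ, ∀ᶠ n in atTop, ∃ x, ((comp (Gs n) x).ball r).Iso (A.ball r) := by
    intro r
    have ht := h _ (bddContOn_ballTest M A r)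
    have h1 : ballTest A r (cls A) = 1 :=
      if_pos (⟨SimpleGraph.Iso.refl, rfl⟩ : (A.ball r).Iso (A.ball r))
    rw [integral_dirac, h1] at ht
    filter_upwards [ht.eventually_ne one_ne_zero] with n hn
    have := hfin n
    exact exists_ball_iso_of_integral_ne_zero _ _ _ hn
  let P : ℕ → ℕ → Prop := fun n r => ∃ x, ((comp (Gs n) x).ball r).Iso (A.ball r)
  -- `R n` is the largest radius up to `n` realised in `Gs n`, so `R n` tends to infinity by `hev`
  let R : ℕ → ℕ := fun n => Nat.findGreatest (P n) n
  have hchoice : ∀ n, ∃ o : V n, P n (R n) → ((comp (Gs n) o).ball (R n)).Iso (A.ball (R n)) := by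
    intro n
    by_cases hP : P n (R n)
    · obtain ⟨x, hx⟩ := hP
      exact ⟨x, fun _ => hx⟩
    · exact ⟨(hne n).some, fun h' => absurd h' hP⟩
  choose o ho using hchoice
  refine ⟨o, ?_⟩
  rw [Metric.tendsto_atTop']
  intro ε hε
  obtain ⟨k, hk⟩ := exists_nat_one_div_lt hε
  obtain ⟨N, hN⟩ := eventually_atTop.1 ((hev k).and (eventually_ge_atTop k))
  refine ⟨N, fun n hn => ?_⟩
  obtain ⟨hPk, hkn⟩ := hN n hn.le
  have hspec : P n (R n) := Nat.findGreatest_spec (P := P n) hkn hPk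
  have hkR : k ≤ R n := Nat.le_findGreatest hkn hPk
  have := hfin n
  have : Finite (comp (Gs n) (o n)).V := inferInstanceAs (Finite {v // (Gs n).Reachable (o n) v})
  rw [Real.dist_0_eq_abs, abs_of_nonneg (RootedGraph.rho_nonneg _ _)]
  calc RootedGraph.rho (comp (Gs n) (o n)) A ≤ 1 / (1 + (R n : ℝ)) :=
        RootedGraph.rho_le_of_ball_iso (ho n hspec)
    _ ≤ 1 / (1 + (k : ℝ)) := by gcongr
    _ < ε := by rwa [add_comm]
end

section
/- Every law is unimodular: for every nonempty finite simple graph G with maximal degree at most M, the probability measure Ψ(G) on Ĝ_M satisfies the intrinsic Mass Transport Principle, i.e. ∫ Σ_{x ∈ V(H)} f[H,x,o] dΨ(G)[H,o] = ∫ Σ_{x ∈ V(H)} f[H,o,x] dΨ(G)[H,o] for every nonnegative measurable function f on isomorphism classes of connected birooted graphs. -/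
/-!
Up to the factor `1 / |V|`, integrating against the law of `G` is summing over the vertices `o` of
`G`. The inner sum over the chosen representative of a class does not depend on the representative,
since an isomorphism of rooted graphs reindexes the sum (`tsum_out_cls`); so it may be computed on
the connected component of `o`, and extended by zero to all vertices of `G`. The two sides become
`∑ o, ∑ x, F x o` and `∑ o, ∑ x, F o x`, where `F x y` is the value of `f` on the common component
of `x` and `y` birooted at `(x, y)`, and `0` if there is no such component (`transport`). Reading
`F x o` on the left uses that `x` and `o` have the same component (`transport_symm_comp`).
Interchanging the two sums concludes.
-/

open MeasureTheory Filter Topology ENNReal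
open scoped Classical

/-- A birooted graph: a simple graph with an ordered pair of roots. -/
structure BiRootedGraph : Type 1 where
  V : Type
  G : SimpleGraph V
  root1 : V
  root2 : V

/-- Isomorphism of birooted graphs. -/
def BiRootedGraph.Iso (A B : BiRootedGraph) : Prop :=
  ∃ φ : A.G ≃g B.G, φ A.root1 = B.root1 ∧ φ A.root2 = B.root2

/-- The space of isomorphism classes of birooted graphs. -/
def BRG := Quot BiRootedGraph.Iso

/-- The isomorphism class of a birooted graph. -/
def bcls (A : BiRootedGraph) : BRG := Quot.mk _ A

/-- A measure on the space of (classes of) rooted graphs is unimodular if it satisfies the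
intrinsic Mass Transport Principle: for every nonnegative (measurable) function `f` on
isomorphism classes of birooted graphs,
`∫ Σ_{x ∈ V(G)} f[G,x,o] dμ[G,o] = ∫ Σ_{x ∈ V(G)} f[G,o,x] dμ[G,o]`. -/
def Unimodular (μ : MeasureTheory.Measure RG) : Prop :=
  ∀ f : BRG → ℝ≥0∞,
    ∫⁻ c, (∑' x : (Quot.out c).V,
        f (bcls ⟨(Quot.out c).V, (Quot.out c).G, x, (Quot.out c).root⟩)) ∂μ
      = ∫⁻ c, (∑' x : (Quot.out c).V,
        f (bcls ⟨(Quot.out c).V, (Quot.out c).G, (Quot.out c).root, x⟩)) ∂μ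

theorem RootedGraph.iso_equivalence : Equivalence RootedGraph.Iso where
  refl A := ⟨SimpleGraph.Iso.refl, rfl⟩
  symm := by
    rintro A B ⟨φ, h⟩
    exact ⟨φ.symm, by rw [← h]; exact φ.symm_apply_apply _⟩
  trans := by
    rintro A B C ⟨φ, h⟩ ⟨ψ, k⟩
    exact ⟨φ.trans ψ, by rw [← k, ← h]; rfl⟩

theorem out_cls_iso (A : RootedGraph) : (Quot.out (cls A)).Iso A :=
  (RootedGraph.iso_equivalence.eqvGen_iff).1 (Quot.eqvGen_exact (Quot.out_eq (cls A)))

/-- The sum over all vertices of a function of the graph, its root and the vertex depends only on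
the class of the rooted graph. Stating this for functions `F` of the two roots in either order
covers both sides of the Mass Transport Principle. -/
theorem tsum_out_cls (F : (W : Type) → SimpleGraph W → W → W → ℝ≥0∞)
    (hF : ∀ (W W' : Type) (H : SimpleGraph W) (H' : SimpleGraph W') (φ : H ≃g H') (a b : W),
      F W H a b = F W' H' (φ a) (φ b)) (A : RootedGraph) :
    ∑' x : (Quot.out (cls A)).V, F _ (Quot.out (cls A)).G (Quot.out (cls A)).root x
      = ∑' x : A.V, F _ A.G A.root x := by
  obtain ⟨φ, h⟩ := out_cls_iso A
  rw [← Equiv.tsum_eq φ.toEquiv]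
  refine tsum_congr fun x => ?_
  rw [hF _ _ _ _ φ, h]
  rfl

theorem bcls_map {W W' : Type} {H : SimpleGraph W} {H' : SimpleGraph W'} (φ : H ≃g H')
    (a b : W) : bcls ⟨W, H, a, b⟩ = bcls ⟨W', H', φ a, φ b⟩ :=
  Quot.sound ⟨φ, rfl, rfl⟩

/-- The integral against the law of a finite graph is the average over its vertices. -/
theorem lintegral_law {V : Type} [Fintype V] (G : SimpleGraph V) (g : RG → ℝ≥0∞) :
    ∫⁻ c, g c ∂(law G) = (Nat.card V : ℝ≥0∞)⁻¹ * ∑' o : V, g (cls (comp G o)) := by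
  have hg : Measurable g := fun _ _ => trivial
  rw [law, lintegral_smul_measure, lintegral_sum_measure, smul_eq_mul]
  simp_rw [lintegral_dirac' _ hg]

/-- The mass sent from `x` to `y`: the value of `f` on the component of `x` birooted at `(x, y)`,
and `0` if `y` lies outside this component. -/
noncomputable def transport {V : Type} (G : SimpleGraph V) (f : BRG → ℝ≥0∞) (x y : V) : ℝ≥0∞ :=
  if h : G.Reachable x y then
    f (bcls ⟨(comp G x).V, (comp G x).G, (comp G x).root, ⟨y, h⟩⟩) else 0

/-- The mass sent from `y` to `x` can be read on the component of `x`, which is that of `y`. -/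
theorem transport_symm_comp {V : Type} (G : SimpleGraph V) (f : BRG → ℝ≥0∞) (x y : V)
    (h : G.Reachable x y) :
    transport G f y x = f (bcls ⟨(comp G x).V, (comp G x).G, ⟨y, h⟩, (comp G x).root⟩) := by
  have key : ∀ (S T : Set V) (_ : S = T) (a b : V) (ha : a ∈ S) (hb : b ∈ S)
      (ha' : a ∈ T) (hb' : b ∈ T),
      bcls ⟨S, G.induce S, ⟨a, ha⟩, ⟨b, hb⟩⟩ = bcls ⟨T, G.induce T, ⟨a, ha'⟩, ⟨b, hb'⟩⟩ := by
    rintro S _ rfl a b _ _ _ _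
    rfl
  have hST : {v : V | G.Reachable y v} = {v : V | G.Reachable x v} :=
    Set.ext fun v => ⟨fun hv => h.trans hv, fun hv => h.symm.trans hv⟩
  rw [transport, dif_pos h.symm]
  exact congrArg f (key _ _ hST y x _ _ _ _)

/-- A sum over the component of `o` is a sum over all vertices, for summands vanishing outside
the component. -/
theorem tsum_comp {V : Type} (G : SimpleGraph V) (o : V) (g : V → ℝ≥0∞)
    (hg : ∀ v, ¬ G.Reachable o v → g v = 0) :
    ∑' x : (comp G o).V, g x.1 = ∑' x : V, g x := by
  refine tsum_subtype_eq_of_support_subset (s := {v : V | G.Reachable o v}) fun v hv => ?_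
  by_contra hn
  exact hv (hg v hn)

/-- Every law is unimodular: the law of a nonempty finite graph with maximal degree at most M
satisfies the intrinsic Mass Transport Principle. -/
theorem law_unimodular (M : ℕ) {V : Type} [Fintype V] [Nonempty V]
    (G : SimpleGraph V) (hdeg : ∀ v : V, (G.neighborSet v).ncard ≤ M) :
    Unimodular (law G) := by
  intro f
  rw [lintegral_law, lintegral_law]
  congr 1
  have hin : ∀ o : V, (∑' x : (Quot.out (cls (comp G o))).V,
      f (bcls ⟨(Quot.out (cls (comp G o))).V, (Quot.out (cls (comp G o))).G, x,
        (Quot.out (cls (comp G o))).root⟩)) = ∑' x : V, transport G f x o := by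
    intro o
    rw [tsum_out_cls (fun W H a b => f (bcls ⟨W, H, b, a⟩))
      (fun _ _ _ _ φ a b => congrArg f (bcls_map φ b a)),
      ← tsum_comp G o (fun x => transport G f x o) fun v hv => dif_neg fun h => hv h.symm]
    exact tsum_congr fun x => (transport_symm_comp G f o x.1 x.2).symm
  have hout : ∀ o : V, (∑' x : (Quot.out (cls (comp G o))).V,
      f (bcls ⟨(Quot.out (cls (comp G o))).V, (Quot.out (cls (comp G o))).G,
        (Quot.out (cls (comp G o))).root, x⟩)) = ∑' x : V, transport G f o x := by
    intro o
    rw [tsum_out_cls (fun W H a b => f (bcls ⟨W, H, a, b⟩))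
      (fun _ _ _ _ φ a b => congrArg f (bcls_map φ a b)),
      ← tsum_comp G o (fun x => transport G f o x) fun v hv => dif_neg hv]
    exact tsum_congr fun x => by rw [transport, dif_pos x.2]; rfl
  simp_rw [hin, hout]
  exact ENNReal.tsum_comm
end
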